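/- For all named GS4 derivations P with conclusion ⊢Γ,A∧B, the branch-labeled axiom graph decomposes as ⟨⟨P⟩⟩ = ⟨⟨P⟩⟩↾_{Γ,A} ⊔ ⟨⟨P⟩⟩↾_{Γ,B}. -/

import Mathlib

open scoped Classical

noncomputable section

namespace GS4

/-- Named classical propositional formulas over atoms `α`, with names in `ℕ`. -/
inductive NForm (α : Type) : Type
  | atom : ℕ → α → NForm α
  | or   : NForm α → NForm α → NForm α
  | and  : NForm α → NForm α → NForm α

variable {α : Type}

/-- Name-preserving De Morgan negation, w.r.t. an involution `bar` on atoms. -/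
def negF (bar : α → α) : NForm α → NForm α
  | .atom x a => .atom x (bar a)
  | .or A B => .and (negF bar A) (negF bar B)
  | .and A B => .or (negF bar A) (negF bar B)

/-- The set of names occurring in a named formula. -/
def NForm.names : NForm α → Set ℕ
  | .atom x _ => {x}
  | .or A B => A.names ∪ B.names
  | .and A B => A.names ∪ B.names

/-- A named formula is sharing-free if every name occurs at most once in it. -/
def NForm.sharingFree : NForm α → Prop
  | .atom _ _ => True
  | .or A B => A.sharingFree ∧ B.sharingFree ∧ Disjoint A.names B.names
  | .and A B => A.sharingFree ∧ B.sharingFree ∧ Disjoint A.names B.names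

def NForm.isAtom : NForm α → Prop
  | .atom _ _ => True
  | _ => False

/-- Anonymous formulas (shapes): `A ≡ B` iff their shapes coincide. -/
inductive Shape (α : Type) : Type
  | atom : α → Shape α
  | or   : Shape α → Shape α → Shape α
  | and  : Shape α → Shape α → Shape α

def NForm.shape : NForm α → Shape α
  | .atom _ a => .atom a
  | .or A B => .or A.shape B.shape
  | .and A B => .and A.shape B.shape

/-- `HasAtom A x a`: the atomic formula `x:a` occurs in `A`. -/
def HasAtom : NForm α → ℕ → α → Prop
  | .atom y b, x, a => y = x ∧ b = a
  | .or A B, x, a => HasAtom A x a ∨ HasAtom B x a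
  | .and A B, x, a => HasAtom A x a ∨ HasAtom B x a

/-- Names of a finite set of named formulas. -/
def snames (Γ : Finset (NForm α)) : Set ℕ := ⋃ A ∈ Γ, A.names

/-- A finite set of named formulas is sharing-free if all its elements are
sharing-free with pairwise disjoint name sets. -/
def SFSet (Γ : Finset (NForm α)) : Prop :=
  (∀ A ∈ Γ, A.sharingFree) ∧
  ∀ A ∈ Γ, ∀ B ∈ Γ, A ≠ B → Disjoint A.names B.names

/-- `x:a` occurs in some formula of `Γ` (i.e. `Γ[x] = a` for sharing-free `Γ`). -/
def HasAtomS (Γ : Finset (NForm α)) (x : ℕ) (a : α) : Prop :=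
  ∃ A ∈ Γ, HasAtom A x a

/-- Branch sets of named formulas. -/
def BrF : NForm α → Set (Set ℕ)
  | .atom x _ => {{x}}
  | .or A B => {X | ∃ Y ∈ BrF A, ∃ Z ∈ BrF B, X = Y ∪ Z}
  | .and A B => BrF A ∪ BrF B

/-- Branch sets of sequents (finite sharing-free sets of named formulas). -/
def BrS (Γ : Finset (NForm α)) : Set (Set ℕ) :=
  {X | X ⊆ snames Γ ∧ ∀ A ∈ Γ, X ∩ A.names ∈ BrF A}

/-! ## Branch-labeled name graphs -/

/-- A branch-labeled name graph: vertices and a relation between unordered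
pairs of vertices and branch labels. -/
structure BLGraph : Type where
  verts : Set ℕ
  rel : Sym2 ℕ → Set ℕ → Prop

/-- Well-formedness of a bl-graph: related pairs consist of distinct vertices,
labels are sets of vertices, and each edge is included in its labels. -/
def BLGraph.IsBL (G : BLGraph) : Prop :=
  ∀ e X, G.rel e X → ¬ e.IsDiag ∧ X ⊆ G.verts ∧ ∀ v ∈ e, v ∈ X

def BLGraph.Edges (G : BLGraph) : Set (Sym2 ℕ) := {e | ∃ X, G.rel e X}

def BLGraph.Br (G : BLGraph) : Set (Set ℕ) := {X | ∃ e, G.rel e X}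

def BLGraph.union (G H : BLGraph) : BLGraph :=
  ⟨G.verts ∪ H.verts, fun e X => G.rel e X ∨ H.rel e X⟩

/-- Restriction `G↾_S` of a bl-graph. -/
def BLGraph.restrict (G : BLGraph) (S : Set ℕ) : BLGraph :=
  ⟨G.verts ∩ S, fun e X => G.rel e X ∧ X ⊆ S⟩

/-- The interface-relativized edge-branch relation `e ⊰^I_G X`. -/
def BLGraph.relI (G : BLGraph) (I : Set ℕ) (e : Sym2 ℕ) (X : Set ℕ) : Prop :=
  ∃ Y, G.rel e Y ∧ X = Y \ I

/-- `z 0, …, z (n-1)` is an `X`-labeled alternating path between `G` and `H`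
through the interface `I`. -/
def AltPath (G H : BLGraph) (I X : Set ℕ) (n : ℕ) (z : ℕ → ℕ) : Prop :=
  1 < n ∧
  (∀ i < n, ∀ j < n, z i = z j → i = j) ∧
  (∀ i, 0 < i → i + 1 < n → z i ∈ I) ∧
  ((∀ i, i + 1 < n →
      (Even i → G.relI I s(z i, z (i + 1)) X) ∧ (¬ Even i → H.relI I s(z i, z (i + 1)) X)) ∨
   (∀ i, i + 1 < n →
      (Even i → H.relI I s(z i, z (i + 1)) X) ∧ (¬ Even i → G.relI I s(z i, z (i + 1)) X)))

/-- Composition of bl-graphs over an interface `I`. -/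
def BLGraph.comp (G H : BLGraph) (I : Set ℕ) : BLGraph :=
  ⟨(G.verts ∪ H.verts) \ I,
   fun e X => ∃ n z, AltPath G H I X n z ∧ z 0 ∉ I ∧ z (n - 1) ∉ I ∧
     e = s(z 0, z (n - 1))⟩

/-- The weakening operator on bl-graphs: add vertices `V` and extend every
branch label by a member of `Brs`. -/
def blwk (V : Set ℕ) (Brs : Set (Set ℕ)) (G : BLGraph) : BLGraph :=
  ⟨G.verts ∪ V, fun e X => ∃ Y Z, G.rel e Y ∧ Z ∈ Brs ∧ X = Y ∪ Z⟩

/-- The bl-identity graph `id_{A,C}` on a pair of dual formulas. -/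
def blid : NForm α → NForm α → BLGraph
  | .atom x _, .atom y _ => ⟨{x, y}, fun e X => e = s(x, y) ∧ X = {x, y}⟩
  | .or A1 A2, .and C1 C2 =>
      (blwk A2.names (BrF A2) (blid A1 C1)).union (blwk A1.names (BrF A1) (blid A2 C2))
  | .and A1 A2, .or C1 C2 =>
      (blwk C2.names (BrF C2) (blid A1 C1)).union (blwk C1.names (BrF C1) (blid A2 C2))
  | _, _ => ⟨∅, fun _ _ => False⟩

/-! ## Simple name graphs -/

/-- A simple name graph. -/
structure NGraph : Type where
  verts : Set ℕ
  edges : Set (Sym2 ℕ)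

/-- Subgraph relation `H ⊑ G`. -/
def NGraph.Sub (H G : NGraph) : Prop := H.verts ⊆ G.verts ∧ H.edges ⊆ G.edges

def NGraph.union (G H : NGraph) : NGraph := ⟨G.verts ∪ H.verts, G.edges ∪ H.edges⟩

/-- Induced subgraph `G↾_S`. -/
def NGraph.restrict (G : NGraph) (S : Set ℕ) : NGraph :=
  ⟨G.verts ∩ S, {e ∈ G.edges | ∀ v ∈ e, v ∈ S}⟩

/-- Alternating paths between simple name graphs through an interface. -/
def NAltPath (G H : NGraph) (I : Set ℕ) (n : ℕ) (z : ℕ → ℕ) : Prop :=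
  0 < n ∧
  (∀ i < n, ∀ j < n, z i = z j → i = j) ∧
  (∀ i, 0 < i → i + 1 < n → z i ∈ I) ∧
  ((∀ i, i + 1 < n →
      (Even i → s(z i, z (i + 1)) ∈ G.edges) ∧ (¬ Even i → s(z i, z (i + 1)) ∈ H.edges)) ∨
   (∀ i, i + 1 < n →
      (Even i → s(z i, z (i + 1)) ∈ H.edges) ∧ (¬ Even i → s(z i, z (i + 1)) ∈ G.edges)))

/-- Composition of simple name graphs over an interface. -/
def NGraph.comp (G H : NGraph) (I : Set ℕ) : NGraph :=
  ⟨(G.verts ∪ H.verts) \ I,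
   {e | ∃ x y, x ≠ y ∧ x ∈ (G.verts ∪ H.verts) \ I ∧ y ∈ (G.verts ∪ H.verts) \ I ∧
        e = s(x, y) ∧ ∃ n z, NAltPath G H I n z ∧ z 0 = x ∧ z (n - 1) = y}⟩

/-- The identity graph `Id_{A,C}` on a pair of dual formulas. -/
def idg : NForm α → NForm α → NGraph
  | .atom x _, .atom y _ => ⟨{x, y}, {s(x, y)}⟩
  | .or A1 A2, .and C1 C2 => (idg A1 C1).union (idg A2 C2)
  | .and A1 A2, .or C1 C2 => (idg A1 C1).union (idg A2 C2)
  | _, _ => ⟨∅, ∅⟩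

/-- The edgeless (weakening) graph on the names of `Γ`. -/
def wkg (Γ : Finset (NForm α)) : NGraph := ⟨snames Γ, ∅⟩

/-! ## Named GS4 derivations -/

/-- Named GS4 derivation trees. -/
inductive Deriv (α : Type) : Type
  | ax (Γ : Finset (NForm α)) (A C : NForm α)
  | cut (A : NForm α) (P Q : Deriv α)
  | sup (P Q : Deriv α)
  | orI (A B : NForm α) (P : Deriv α)
  | andI (A B : NForm α) (P Q : Deriv α)

/-- Conclusion of a derivation tree. -/
def concl : Deriv α → Finset (NForm α)
  | .ax Γ A C => insert A (insert C Γ)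
  | .cut A P _ => (concl P).erase A
  | .sup P _ => concl P
  | .orI A B P => insert (NForm.or A B) (((concl P).erase A).erase B)
  | .andI A B P _ => insert (NForm.and A B) ((concl P).erase A)

/-- Well-formedness of derivation trees w.r.t. the atom involution `bar`:
each rule is applied correctly to sharing-free named sequents. -/
def WF (bar : α → α) : Deriv α → Prop
  | .ax Γ A C =>
      A.shape = (negF bar C).shape ∧
      A.sharingFree ∧ C.sharingFree ∧ SFSet Γ ∧
      Disjoint A.names C.names ∧
      Disjoint A.names (snames Γ) ∧ Disjoint C.names (snames Γ)
  | .cut A P Q =>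
      WF bar P ∧ WF bar Q ∧
      ∃ Γ : Finset (NForm α), A ∉ Γ ∧ negF bar A ∉ Γ ∧
        concl P = insert A Γ ∧ concl Q = insert (negF bar A) Γ ∧
        A.sharingFree ∧ SFSet Γ ∧ Disjoint A.names (snames Γ)
  | .sup P Q => WF bar P ∧ WF bar Q ∧ concl P = concl Q
  | .orI A B P =>
      WF bar P ∧
      ∃ Γ : Finset (NForm α), A ∉ Γ ∧ B ∉ Γ ∧ A ≠ B ∧
        concl P = insert A (insert B Γ) ∧
        A.sharingFree ∧ B.sharingFree ∧ SFSet Γ ∧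
        Disjoint A.names B.names ∧
        Disjoint A.names (snames Γ) ∧ Disjoint B.names (snames Γ)
  | .andI A B P Q =>
      WF bar P ∧ WF bar Q ∧
      ∃ Γ : Finset (NForm α), A ∉ Γ ∧ B ∉ Γ ∧
        concl P = insert A Γ ∧ concl Q = insert B Γ ∧
        A.sharingFree ∧ B.sharingFree ∧ SFSet Γ ∧
        Disjoint A.names B.names ∧
        Disjoint A.names (snames Γ) ∧ Disjoint B.names (snames Γ)

/-- A derivation is cut-free if it contains no cut rule. -/
def CutFree : Deriv α → Prop
  | .ax _ _ _ => True
  | .cut _ _ _ => False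
  | .sup P Q => CutFree P ∧ CutFree Q
  | .orI _ _ P => CutFree P
  | .andI _ _ P Q => CutFree P ∧ CutFree Q

/-- The branch-labeled axiom graph `⟨⟨P⟩⟩` of a derivation. -/
def blaxg : Deriv α → BLGraph
  | .ax Γ A C => blwk (snames Γ) (BrS Γ) (blid A C)
  | .cut A P Q => BLGraph.comp (blaxg P) (blaxg Q) A.names
  | .sup P Q => (blaxg P).union (blaxg Q)
  | .orI _ _ P => blaxg P
  | .andI _ _ P Q => (blaxg P).union (blaxg Q)

/-- The (simple) axiom graph `⟦P⟧` of a derivation. -/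
def axg : Deriv α → NGraph
  | .ax Γ A C => (wkg Γ).union (idg A C)
  | .cut A P Q => NGraph.comp (axg P) (axg Q) A.names
  | .sup P Q => (axg P).union (axg Q)
  | .orI _ _ P => axg P
  | .andI _ _ P Q => (axg P).union (axg Q)

/-! ## Inversion and isolation -/

/-- Inversion of a disjunction `D ∨ E` in the conclusion. -/
def inv (D E : NForm α) : Deriv α → Deriv α
  | .ax Γ A C =>
      if A = NForm.or D E then
        match C with
        | .and C1 C2 =>
            .andI C1 C2 (.ax (insert E Γ) D C1) (.ax (insert D Γ) E C2)
        | _ => .ax Γ A C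
      else if C = NForm.or D E then
        match A with
        | .and A1 A2 =>
            .andI A1 A2 (.ax (insert E Γ) A1 D) (.ax (insert D Γ) A2 E)
        | _ => .ax Γ A C
      else
        .ax (insert D (insert E (Γ.erase (NForm.or D E)))) A C
  | .cut A P Q => .cut A (inv D E P) (inv D E Q)
  | .sup P Q => .sup (inv D E P) (inv D E Q)
  | .orI A B P => if A = D ∧ B = E then P else .orI A B (inv D E P)
  | .andI A B P Q => .andI A B (inv D E P) (inv D E Q)

/-- Left inversion of a conjunction `D ∧ E` in the conclusion. -/
def invl (D E : NForm α) : Deriv α → Deriv α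
  | .ax Γ A C =>
      if A = NForm.and D E then
        match C with
        | .or C1 C2 => .orI C1 C2 (.ax (insert C2 Γ) D C1)
        | _ => .ax Γ A C
      else if C = NForm.and D E then
        match A with
        | .or A1 A2 => .orI A1 A2 (.ax (insert A2 Γ) A1 D)
        | _ => .ax Γ A C
      else
        .ax (insert D (Γ.erase (NForm.and D E))) A C
  | .cut A P Q => .cut A (invl D E P) (invl D E Q)
  | .sup P Q => .sup (invl D E P) (invl D E Q)
  | .orI A B P => .orI A B (invl D E P)
  | .andI A B P Q => if A = D ∧ B = E then P else .andI A B (invl D E P) (invl D E Q)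

/-- Right inversion of a conjunction `D ∧ E` in the conclusion. -/
def invr (D E : NForm α) : Deriv α → Deriv α
  | .ax Γ A C =>
      if A = NForm.and D E then
        match C with
        | .or C1 C2 => .orI C1 C2 (.ax (insert C1 Γ) E C2)
        | _ => .ax Γ A C
      else if C = NForm.and D E then
        match A with
        | .or A1 A2 => .orI A1 A2 (.ax (insert A1 Γ) A2 E)
        | _ => .ax Γ A C
      else
        .ax (insert E (Γ.erase (NForm.and D E))) A C
  | .cut A P Q => .cut A (invr D E P) (invr D E Q)
  | .sup P Q => .sup (invr D E P) (invr D E Q)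
  | .orI A B P => .orI A B (invr D E P)
  | .andI A B P Q => if A = D ∧ B = E then Q else .andI A B (invr D E P) (invr D E Q)

/-- Isolation of a non-atomic formula in the conclusion. -/
def isl : NForm α → Deriv α → Deriv α
  | .or A B, P => .orI A B (inv A B P)
  | .and A B, P => .andI A B (invl A B P) (invr A B P)
  | .atom _ _, P => P

/-- Totality of a bl-graph w.r.t. a sharing-free named sequent. -/
def Total (bar : α → α) (G : BLGraph) (Γ : Finset (NForm α)) : Prop :=
  G.verts = snames Γ ∧
  G.Br = BrS Γ ∧
  ∀ x y : ℕ, s(x, y) ∈ G.Edges →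
    ∀ a b : α, HasAtomS Γ x a → HasAtomS Γ y b → a = bar b

theorem names_negF (bar : α → α) (A : NForm α) : (negF bar A).names = A.names := by
  induction A <;> simp_all [negF, NForm.names]

theorem subset_names_of_mem_BrF {A : NForm α} {X : Set ℕ} (hX : X ∈ BrF A) : X ⊆ A.names := by
  induction A generalizing X with
  | atom x a => simp_all [BrF, NForm.names]
  | or A B ihA ihB =>
    obtain ⟨Y, hY, Z, hZ, rfl⟩ := hX
    exact Set.union_subset_union (ihA hY) (ihB hZ)
  | and A B ihA ihB =>
    rcases hX with hX | hX
    · exact (ihA hX).trans Set.subset_union_left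
    · exact (ihB hX).trans Set.subset_union_right

theorem snames_insert (A : NForm α) (Γ : Finset (NForm α)) :
    snames (insert A Γ) = A.names ∪ snames Γ := by
  simp [snames]

theorem names_subset_snames {A : NForm α} {Γ : Finset (NForm α)} (hA : A ∈ Γ) :
    A.names ⊆ snames Γ :=
  Set.subset_biUnion_of_mem (u := NForm.names) hA

theorem blid_verts_subset (A C : NForm α) : (blid A C).verts ⊆ A.names ∪ C.names := by
  induction A generalizing C with
  | atom x a => cases C <;> simp [blid, NForm.names, Set.insert_subset_iff]
  | or A₁ A₂ ih₁ ih₂ =>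
    cases C with
    | atom | or => simp [blid]
    | and C₁ C₂ =>
      have h₁ := ih₁ C₁
      have h₂ := ih₂ C₂
      simp only [blid, blwk, BLGraph.union, NForm.names]
      grind
  | and A₁ A₂ ih₁ ih₂ =>
    cases C with
    | atom | and => simp [blid]
    | or C₁ C₂ =>
      have h₁ := ih₁ C₁
      have h₂ := ih₂ C₂
      simp only [blid, blwk, BLGraph.union, NForm.names]
      grind

/-- Every label of the bl-identity is the union of a branch of each of the two formulas. -/
theorem exists_branches_of_blid_rel {A C : NForm α} {e : Sym2 ℕ} {X : Set ℕ}
    (h : (blid A C).rel e X) : ∃ U ∈ BrF A, ∃ V ∈ BrF C, X = U ∪ V := by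
  induction A generalizing C X with
  | atom x a =>
    cases C with
    | atom y b => exact ⟨{x}, rfl, {y}, rfl, h.2⟩
    | or | and => exact h.elim
  | or A₁ A₂ ih₁ ih₂ =>
    cases C with
    | atom | or => exact h.elim
    | and C₁ C₂ =>
      rcases h with ⟨Y, Z, hY, hZ, rfl⟩ | ⟨Y, Z, hY, hZ, rfl⟩
      · obtain ⟨U, hU, V, hV, rfl⟩ := ih₁ hY
        exact ⟨U ∪ Z, ⟨U, hU, Z, hZ, rfl⟩, V, Or.inl hV, Set.union_right_comm ..⟩
      · obtain ⟨U, hU, V, hV, rfl⟩ := ih₂ hY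
        exact ⟨Z ∪ U, ⟨Z, hZ, U, hU, rfl⟩, V, Or.inr hV, by grind⟩
  | and A₁ A₂ ih₁ ih₂ =>
    cases C with
    | atom | and => exact h.elim
    | or C₁ C₂ =>
      rcases h with ⟨Y, Z, hY, hZ, rfl⟩ | ⟨Y, Z, hY, hZ, rfl⟩
      · obtain ⟨U, hU, V, hV, rfl⟩ := ih₁ hY
        exact ⟨U, Or.inl hU, V ∪ Z, ⟨V, hV, Z, hZ, rfl⟩, Set.union_assoc ..⟩
      · obtain ⟨U, hU, V, hV, rfl⟩ := ih₂ hY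
        exact ⟨U, Or.inr hU, Z ∪ V, ⟨Z, hZ, V, hV, rfl⟩, by grind⟩

theorem mem_BrS_insert {A : NForm α} {Γ : Finset (NForm α)} {X : Set ℕ} :
    X ∈ BrS (insert A Γ) ↔
      X ⊆ A.names ∪ snames Γ ∧ X ∩ A.names ∈ BrF A ∧ ∀ D ∈ Γ, X ∩ D.names ∈ BrF D := by
  simp only [BrS, Set.mem_ofPred_eq, snames_insert, Finset.forall_mem_insert]

theorem union_mem_BrS_insert {A : NForm α} {Γ : Finset (NForm α)} {U X : Set ℕ}
    (hd : Disjoint A.names (snames Γ)) (hU : U ∈ BrF A) (hX : X ∈ BrS Γ) :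
    U ∪ X ∈ BrS (insert A Γ) := by
  have hUA := subset_names_of_mem_BrF hU
  refine mem_BrS_insert.2 ⟨Set.union_subset_union hUA hX.1, ?_, fun D hD => ?_⟩
  · rwa [Set.union_inter_distrib_right, (hd.symm.mono_left hX.1).inter_eq, Set.union_empty,
      Set.inter_eq_left.2 hUA]
  · rw [Set.union_inter_distrib_right, (hd.mono hUA (names_subset_snames hD)).inter_eq,
      Set.empty_union]
    exact hX.2 D hD

theorem diff_mem_BrS {A : NForm α} {Γ : Finset (NForm α)} {X : Set ℕ}
    (hd : Disjoint A.names (snames Γ)) (hX : X ∈ BrS (insert A Γ)) :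
    X \ A.names ∈ BrS Γ := by
  obtain ⟨hs, -, hΓ⟩ := mem_BrS_insert.1 hX
  refine ⟨Set.sdiff_subset_iff.2 hs, fun D hD => ?_⟩
  have hAD : Disjoint D.names A.names := (hd.mono_right (names_subset_snames hD)).symm
  rw [← Set.inter_sdiff_right_comm, (hAD.mono_left Set.inter_subset_right).sdiff_eq_left]
  exact hΓ D hD

theorem mem_BrS_insert_or {A B : NForm α} {Γ : Finset (NForm α)} {X : Set ℕ}
    (hX : X ∈ BrS (insert A (insert B Γ))) : X ∈ BrS (insert (A.or B) Γ) := by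
  simp only [BrS, Set.mem_ofPred_eq, snames_insert, Finset.forall_mem_insert] at hX ⊢
  obtain ⟨hs, hA, hB, hΓ⟩ := hX
  refine ⟨by rwa [NForm.names, Set.union_assoc], ?_, hΓ⟩
  exact ⟨_, hA, _, hB, Set.inter_union_distrib_left ..⟩

theorem mem_BrS_insert_and_left {A B : NForm α} {Γ : Finset (NForm α)} {X : Set ℕ}
    (hAB : Disjoint A.names B.names) (hB : Disjoint B.names (snames Γ))
    (hX : X ∈ BrS (insert A Γ)) : X ∈ BrS (insert (A.and B) Γ) := by
  rw [mem_BrS_insert] at hX ⊢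
  obtain ⟨hs, hA, hΓ⟩ := hX
  refine ⟨hs.trans (Set.union_subset_union_left _ Set.subset_union_left), Or.inl ?_, hΓ⟩
  have hXB : Disjoint X B.names := (hAB.union_left hB.symm).mono_left hs
  rwa [NForm.names, Set.inter_union_distrib_left, hXB.inter_eq, Set.union_empty]

theorem mem_BrS_insert_and_right {A B : NForm α} {Γ : Finset (NForm α)} {X : Set ℕ}
    (hAB : Disjoint A.names B.names) (hA : Disjoint A.names (snames Γ))
    (hX : X ∈ BrS (insert B Γ)) : X ∈ BrS (insert (A.and B) Γ) := by
  rw [mem_BrS_insert] at hX ⊢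
  obtain ⟨hs, hB, hΓ⟩ := hX
  refine ⟨hs.trans (Set.union_subset_union_left _ Set.subset_union_right), Or.inr ?_, hΓ⟩
  have hXA : Disjoint X A.names := (hAB.symm.union_left hA.symm).mono_left hs
  rwa [NForm.names, Set.inter_union_distrib_left, hXA.inter_eq, Set.empty_union]

theorem relI_of_comp_rel {G H : BLGraph} {I : Set ℕ} {e : Sym2 ℕ} {X : Set ℕ}
    (h : (G.comp H I).rel e X) : ∃ f, G.relI I f X ∨ H.relI I f X := by
  obtain ⟨n, z, ⟨hn, -, -, hG | hH⟩, -⟩ := h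
  · exact ⟨_, Or.inl ((hG 0 (by omega)).1 Even.zero)⟩
  · exact ⟨_, Or.inr ((hH 0 (by omega)).1 Even.zero)⟩

theorem blaxg_verts_subset {bar : α → α} {P : Deriv α} (hP : WF bar P) :
    (blaxg P).verts ⊆ snames (concl P) := by
  induction P with
  | ax Γ A C =>
    have := blid_verts_subset A C
    simp only [blaxg, blwk, concl, snames_insert]
    grind
  | cut A P Q ihP ihQ =>
    obtain ⟨hP, hQ, Γ, hA, -, hcP, hcQ, -⟩ := hP
    have hP := ihP hP
    have hQ := ihQ hQ
    rw [hcP, snames_insert] at hP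
    rw [hcQ, snames_insert, names_negF] at hQ
    simp only [blaxg, BLGraph.comp, concl, hcP, Finset.erase_insert hA]
    exact Set.sdiff_subset_iff.2 (Set.union_subset hP hQ)
  | sup P Q ihP ihQ =>
    obtain ⟨hP, hQ, hc⟩ := hP
    exact Set.union_subset (ihP hP) (hc ▸ ihQ hQ)
  | orI A B P ih =>
    obtain ⟨hP, Γ, hA, hB, hne, hc, -⟩ := hP
    have hP := ih hP
    rw [hc, snames_insert, snames_insert, ← Set.union_assoc] at hP
    have hA' : A ∉ insert B Γ := by simp [hA, hne]
    simpa only [concl, hc, Finset.erase_insert hA', Finset.erase_insert hB, snames_insert,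
      blaxg, NForm.names] using hP
  | andI A B P Q ihP ihQ =>
    obtain ⟨hP, hQ, Γ, hA, -, hcP, hcQ, -⟩ := hP
    have hP := ihP hP
    have hQ := ihQ hQ
    rw [hcP, snames_insert] at hP
    rw [hcQ, snames_insert] at hQ
    simp only [blaxg, BLGraph.union, concl, hcP, Finset.erase_insert hA, snames_insert, NForm.names]
    grind

/-- Every label of the bl-axiom graph is a branch of the conclusion. -/
theorem mem_BrS_of_blaxg_rel {bar : α → α} {P : Deriv α} (hP : WF bar P) {e : Sym2 ℕ}
    {X : Set ℕ} (h : (blaxg P).rel e X) : X ∈ BrS (concl P) := by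
  induction P generalizing e X with
  | ax Γ A C =>
    obtain ⟨-, -, -, -, hAC, hA, hC⟩ := hP
    obtain ⟨Y, Z, hY, hZ, rfl⟩ := h
    obtain ⟨U, hU, V, hV, rfl⟩ := exists_branches_of_blid_rel hY
    rw [Set.union_assoc]
    refine union_mem_BrS_insert ?_ hU (union_mem_BrS_insert hC hV hZ)
    rw [snames_insert]
    exact hAC.union_right hA
  | cut A P Q ihP ihQ =>
    obtain ⟨hP, hQ, Γ, hA, -, hcP, hcQ, -, -, hd⟩ := hP
    simp only [concl, hcP, Finset.erase_insert hA]
    obtain ⟨f, ⟨Y, hY, rfl⟩ | ⟨Y, hY, rfl⟩⟩ := relI_of_comp_rel h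
    · exact diff_mem_BrS hd (hcP ▸ ihP hP hY)
    · rw [← names_negF bar A] at hd ⊢
      exact diff_mem_BrS hd (hcQ ▸ ihQ hQ hY)
  | sup P Q ihP ihQ =>
    obtain ⟨hP, hQ, hc⟩ := hP
    rcases h with h | h
    · exact ihP hP h
    · exact (congrArg BrS hc).symm ▸ ihQ hQ h
  | orI A B P ih =>
    obtain ⟨hP, Γ, hA, hB, hne, hc, -⟩ := hP
    have hA' : A ∉ insert B Γ := by simp [hA, hne]
    simp only [concl, hc, Finset.erase_insert hA', Finset.erase_insert hB]
    exact mem_BrS_insert_or (hc ▸ ih hP h)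
  | andI A B P Q ihP ihQ =>
    obtain ⟨hP, hQ, Γ, hA, -, hcP, hcQ, -, -, -, hAB, hAΓ, hBΓ⟩ := hP
    simp only [concl, hcP, Finset.erase_insert hA]
    rcases h with h | h
    · exact mem_BrS_insert_and_left hAB hBΓ (hcP ▸ ihP hP h)
    · exact mem_BrS_insert_and_right hAB hAΓ (hcQ ▸ ihQ hQ h)

theorem subset_or_subset_of_mem_BrS_insert_and {A B : NForm α} {Γ : Finset (NForm α)}
    {X : Set ℕ} (hX : X ∈ BrS (insert (A.and B) Γ)) :
    X ⊆ snames Γ ∪ A.names ∨ X ⊆ snames Γ ∪ B.names := by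
  obtain ⟨hs, hAB, -⟩ := mem_BrS_insert.1 hX
  refine hAB.imp (fun h => ?_) (fun h => ?_) <;>
  · have := subset_names_of_mem_BrF h
    grind

/-- Restrictions to two sets that cover all vertices, and one of which contains each label,
recover the whole bl-graph. -/
theorem BLGraph.eq_union_restrict {G : BLGraph} {S T : Set ℕ} (hV : G.verts ⊆ S ∪ T)
    (hrel : ∀ e X, G.rel e X → X ⊆ S ∨ X ⊆ T) :
    G = (G.restrict S).union (G.restrict T) := by
  obtain ⟨V, r⟩ := G
  simp only [BLGraph.union, BLGraph.restrict, BLGraph.mk.injEq]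
  refine ⟨by rw [← Set.inter_union_distrib_left, Set.inter_eq_left.2 hV], ?_⟩
  funext e X
  rw [← and_or_left, eq_iff_iff, iff_self_and]
  exact hrel e X

end GS4
/-- decomposition of the branch-labeled axiom graph of a
derivation of `⊢Γ, A∧B` as the union of its two restrictions. -/
theorem GS4.blaxg_decomposition {α : Type} (bar : α → α)
    (hbar : Function.Involutive bar) (hfix : ∀ a, bar a ≠ a)
    (P : GS4.Deriv α) (hP : GS4.WF bar P)
    (Γ : Finset (GS4.NForm α)) (A B : GS4.NForm α)
    (hAB : GS4.NForm.and A B ∉ Γ)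
    (hc : GS4.concl P = insert (GS4.NForm.and A B) Γ) :
    GS4.blaxg P =
      ((GS4.blaxg P).restrict (GS4.snames Γ ∪ A.names)).union
        ((GS4.blaxg P).restrict (GS4.snames Γ ∪ B.names)) := by
  have hs := GS4.blaxg_verts_subset hP
  refine GS4.BLGraph.eq_union_restrict ?_ fun e X h => ?_
  · rw [hc, GS4.snames_insert, GS4.NForm.names] at hs
    grind
  · exact GS4.subset_or_subset_of_mem_BrS_insert_and (hc ▸ GS4.mem_BrS_of_blaxg_rel hP h)
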